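/- Let f : ℝ → ℂ be 2π-periodic of class C³. There exists a constant c > 0, depending only on f and on the filter ρ and not on N or φ, such that for every even integer N ≥ 2 and every discrete function φ with ⟨f(α_·)φ⟩_h = 0: (a) ‖S_h^{−1}(f(α_·)(S_h φ)) + S_h^{−1}((S_h f(α_·))φ) − f(α_·)φ‖_{l²} ≤ c ‖φ‖_{l²}, where S_h f(α_·) denotes S_h applied to the discrete function of samples of f; and (b) ‖S_h^{−1}(f(α_·)φ)‖_{l²} ≤ c ‖φ‖_{l²}, ‖D_h(S_h^{−1}(f(α_·)φ))‖_{l²} ≤ c ‖φ‖_{l²}, and ‖S_h^{−1}(f(α_·)(S_h φ))‖_{l²} ≤ c ‖φ‖_{l²}. -/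

import Mathlib

open scoped BigOperators
open Finset

noncomputable section

/-- Grid spacing `h = 2π/N`. -/
def hgrid (N : ℤ) : ℝ := 2 * Real.pi / N

/-- Grid points `α_j = j h`. -/
def gridPt (N : ℤ) (j : ℤ) : ℝ := j * hgrid N

/-- Index set `{-N/2+1, …, N/2}`. -/
def idxs (N : ℤ) : Finset ℤ := Finset.Icc (-(N / 2) + 1) (N / 2)

/-- Discrete Fourier coefficient `f̂_k`. -/
def dft (N : ℤ) (f : ℤ → ℂ) (k : ℤ) : ℂ :=
  (N : ℂ)⁻¹ * ∑ j ∈ idxs N, f j * Complex.exp (-(Complex.I * (k : ℂ) * (gridPt N j : ℂ)))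

/-- Reconstruction of a discrete function from Fourier coefficients. -/
def idft (N : ℤ) (c : ℤ → ℂ) (j : ℤ) : ℂ :=
  ∑ k ∈ idxs N, c k * Complex.exp (Complex.I * (k : ℂ) * (gridPt N j : ℂ))

/-- The pseudo-spectral derivative `S_h`. -/
def Sh (N : ℤ) (f : ℤ → ℂ) : ℤ → ℂ :=
  idft N fun k => if k = N / 2 then 0 else Complex.I * (k : ℂ) * dft N f k

/-- The pseudo-spectral antiderivative `S_h⁻¹`. -/
def Shinv (N : ℤ) (f : ℤ → ℂ) : ℤ → ℂ :=
  idft N fun k => if k = 0 then 0 else dft N f k / (Complex.I * (k : ℂ))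

/-- The filtered discrete function `f^p`. -/
def filterP (N : ℤ) (ρ : ℝ → ℝ) (f : ℤ → ℂ) : ℤ → ℂ :=
  idft N fun k => (ρ (gridPt N k) : ℂ) * dft N f k

/-- The filtered derivative `D_h`. -/
def Dh (N : ℤ) (ρ : ℝ → ℝ) (f : ℤ → ℂ) : ℤ → ℂ :=
  idft N fun k => Complex.I * (k : ℂ) * (ρ (gridPt N k) : ℂ) * dft N f k

/-- Discrete `l²` norm. -/
def l2norm (N : ℤ) (f : ℤ → ℂ) : ℝ :=
  Real.sqrt (hgrid N * ∑ j ∈ idxs N, ‖f j‖ ^ 2)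

/-- Discrete Hilbert transform `H_h`. -/
def Hh (N : ℤ) (f : ℤ → ℂ) (i : ℤ) : ℂ :=
  ((hgrid N / Real.pi : ℝ) : ℂ) *
    ∑ j ∈ (idxs N).filter (fun j => Odd (j - i)),
      f j * (Real.cot ((gridPt N i - gridPt N j) / 2) : ℂ)

/-- Discrete inner product `(f,g)_h`. -/
def dip (N : ℤ) (f g : ℤ → ℂ) : ℂ :=
  (hgrid N : ℂ) * ∑ j ∈ idxs N, (starRingEnd ℂ) (f j) * g j

/-- Discrete mean `⟨f⟩_h`. -/
def dmean (N : ℤ) (f : ℤ → ℂ) : ℂ :=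
  (N : ℂ)⁻¹ * ∑ j ∈ idxs N, f j

/-- The discrete function of samples of a periodic function. -/
def samples (N : ℤ) (f : ℝ → ℂ) : ℤ → ℂ := fun j => f (gridPt N j)

/-- Fourier coefficient of a `2π`-periodic function. -/
def fourierCoeffP (f : ℝ → ℂ) (k : ℤ) : ℂ :=
  ((2 * Real.pi)⁻¹ : ℝ) * ∫ α in (-Real.pi)..Real.pi, f α * Complex.exp (-(Complex.I * (k : ℂ) * (α : ℂ)))

/-- Sobolev norm `‖f‖_s`. -/
def sobolevNorm (s : ℕ) (f : ℝ → ℂ) : ℝ :=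
  Real.sqrt (∑' k : ℤ, (1 + (k : ℝ) ^ 2) ^ s * ‖fourierCoeffP f k‖ ^ 2)

/-- A filter (cutoff) function for numerical filtering. -/
structure IsFilter (ρ : ℝ → ℝ) : Prop where
  even : ∀ x, ρ (-x) = ρ x
  nonneg : ∀ x, 0 ≤ ρ x
  smooth : ∃ r : ℕ, 2 < r ∧ ContDiff ℝ r ρ
  zero_at_pi : ρ Real.pi = 0
  zero_at_neg_pi : ρ (-Real.pi) = 0
  deriv_zero_at_pi : deriv ρ Real.pi = 0
  deriv_zero_at_neg_pi : deriv ρ (-Real.pi) = 0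
  one_near_zero : ∃ μ : ℝ, 0 < μ ∧ μ < 1 ∧ ∀ x : ℝ, |x| ≤ μ * Real.pi → ρ x = 1

/-- The Fourier mode `e^{ikα_j}`. -/
def fourierMode (N k j : ℤ) : ℂ := Complex.exp (Complex.I * (k : ℂ) * (gridPt N j : ℂ))

lemma fourierMode_eq_exp_ofReal (N k j : ℤ) :
    fourierMode N k j = Complex.exp (Complex.I * ((k * j * hgrid N : ℝ) : ℂ)) := by
  unfold fourierMode gridPt
  congr 1
  push_cast
  ring

lemma fourierMode_comm (N k j : ℤ) : fourierMode N k j = fourierMode N j k := by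
  simp only [fourierMode_eq_exp_ofReal, mul_comm (k : ℝ)]

lemma fourierMode_add_left (N k l j : ℤ) :
    fourierMode N (k + l) j = fourierMode N k j * fourierMode N l j := by
  unfold fourierMode
  rw [← Complex.exp_add]
  congr 1
  push_cast
  ring

lemma fourierMode_add_right (N k i j : ℤ) :
    fourierMode N k (i + j) = fourierMode N k i * fourierMode N k j := by
  rw [fourierMode_comm, fourierMode_add_left, fourierMode_comm N i, fourierMode_comm N j]

lemma fourierMode_zero_left (N j : ℤ) : fourierMode N 0 j = 1 := by
  simp [fourierMode]

lemma norm_fourierMode (N k j : ℤ) : ‖fourierMode N k j‖ = 1 := by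
  rw [fourierMode_eq_exp_ofReal, Complex.norm_exp_I_mul_ofReal]

lemma conj_fourierMode (N k j : ℤ) :
    (starRingEnd ℂ) (fourierMode N k j) = fourierMode N (-k) j := by
  unfold fourierMode
  rw [← Complex.exp_conj]
  simp

lemma mul_hgrid {N : ℤ} (hN : N ≠ 0) : (N : ℝ) * hgrid N = 2 * Real.pi := by
  have : (N : ℝ) ≠ 0 := by exact_mod_cast hN
  unfold hgrid
  field_simp

lemma hgrid_pos {N : ℤ} (hN : 0 < N) : 0 < hgrid N := by
  have : (0 : ℝ) < N := by exact_mod_cast hN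
  unfold hgrid
  positivity

lemma fourierMode_period {N : ℤ} (hN : N ≠ 0) (k : ℤ) : fourierMode N k N = 1 := by
  rw [fourierMode_eq_exp_ofReal, mul_assoc, mul_hgrid hN, Complex.exp_eq_one_iff]
  exact ⟨k, by push_cast; ring⟩

lemma fourierMode_one_ne_one {N m : ℤ} (hm : m ≠ 0) (hmN : |m| < N) :
    fourierMode N m 1 ≠ 1 := by
  have hN : 0 < N := lt_of_le_of_lt (abs_nonneg m) hmN
  rw [fourierMode_eq_exp_ofReal, Ne, Complex.exp_eq_one_iff]
  rintro ⟨n, hn⟩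
  have hN' : (N : ℂ) ≠ 0 := by exact_mod_cast hN.ne'
  have hmn : (m : ℂ) = n * N := by
    have hpi : (Real.pi : ℂ) ≠ 0 := by exact_mod_cast Real.pi_ne_zero
    have hI := Complex.I_ne_zero
    unfold hgrid at hn
    push_cast at hn
    field_simp at hn
    linear_combination hn
  have hmn' : m = n * N := by exact_mod_cast hmn
  exact hm (Int.eq_zero_of_abs_lt_dvd ⟨n, by rw [hmn', mul_comm]⟩ hmN)

lemma dft_eq_sum (N : ℤ) (f : ℤ → ℂ) (k : ℤ) :
    dft N f k = (N : ℂ)⁻¹ * ∑ j ∈ idxs N, f j * fourierMode N (-k) j := by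
  simp [dft, fourierMode]

lemma idft_eq_sum (N : ℤ) (c : ℤ → ℂ) (j : ℤ) :
    idft N c j = ∑ k ∈ idxs N, c k * fourierMode N k j := rfl

lemma idft_periodic {N : ℤ} (hN : N ≠ 0) (c : ℤ → ℂ) : Function.Periodic (idft N c) N := by
  intro j
  simp only [idft_eq_sum, fourierMode_add_right, fourierMode_period hN, mul_one]

lemma sum_Icc_sub_eq (F : ℤ → ℂ) {a b : ℤ} (hab : a ≤ b) :
    ∑ j ∈ Finset.Icc a b, (F (j + 1) - F j) = F (b + 1) - F a := by
  induction b, hab using Int.leInduction with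
  | base => simp
  | succ b hb ih =>
    rw [← Finset.insert_Icc_right_eq_Icc_add_one (by lia), Finset.sum_insert (by simp), ih]
    ring

lemma sum_idxs_shift {N : ℤ} (hN : 2 ≤ N) (hE : Even N) {F : ℤ → ℂ}
    (hF : Function.Periodic F N) : ∑ j ∈ idxs N, F (j + 1) = ∑ j ∈ idxs N, F j := by
  obtain ⟨n, rfl⟩ := hE
  rw [← sub_eq_zero, ← Finset.sum_sub_distrib, idxs, sum_Icc_sub_eq F (by lia), sub_eq_zero,
    ← hF (-((n + n) / 2) + 1)]
  congr 1
  lia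

lemma card_idxs {N : ℤ} (hN : 2 ≤ N) (hE : Even N) : ((idxs N).card : ℤ) = N := by
  obtain ⟨n, rfl⟩ := hE
  rw [idxs, Int.card_Icc]
  lia

lemma abs_sub_lt_of_mem_idxs {N k l : ℤ} (hk : k ∈ idxs N) (hl : l ∈ idxs N) :
    |k - l| < N := by
  simp only [idxs, Finset.mem_Icc] at hk hl
  rw [abs_lt]
  lia

lemma sum_fourierMode_sub {N : ℤ} (hN : 2 ≤ N) (hE : Even N) {k l : ℤ} (hk : k ∈ idxs N)
    (hl : l ∈ idxs N) :
    ∑ j ∈ idxs N, fourierMode N (k - l) j = if k = l then (N : ℂ) else 0 := by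
  split_ifs with h
  · subst h
    have := card_idxs hN hE
    simp only [sub_self, fourierMode_zero_left, Finset.sum_const, nsmul_eq_mul, mul_one]
    exact_mod_cast this
  · have hN0 : N ≠ 0 := by lia
    have hshift := sum_idxs_shift hN hE (F := fourierMode N (k - l)) (fun j => by
      rw [fourierMode_add_right, fourierMode_period hN0, mul_one])
    simp only [fourierMode_add_right, ← Finset.sum_mul] at hshift
    have hne := fourierMode_one_ne_one (sub_ne_zero.mpr h) (abs_sub_lt_of_mem_idxs hk hl)
    by_contra hS
    exact hne (mul_left_cancel₀ hS (by rw [hshift, mul_one]))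

lemma dft_idft {N : ℤ} (hN : 2 ≤ N) (hE : Even N) (c : ℤ → ℂ) {k : ℤ} (hk : k ∈ idxs N) :
    dft N (idft N c) k = c k := by
  have hN0 : (N : ℂ) ≠ 0 := by exact_mod_cast (by lia : N ≠ 0)
  have key : ∑ j ∈ idxs N, idft N c j * fourierMode N (-k) j = c k * N := by
    simp only [idft_eq_sum, Finset.sum_mul, mul_assoc, ← fourierMode_add_left]
    rw [Finset.sum_comm]
    simp only [← Finset.mul_sum, ← sub_eq_add_neg]
    rw [Finset.sum_eq_single_of_mem k hk, sum_fourierMode_sub hN hE hk hk, if_pos rfl]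
    intro l hl hlk
    rw [sum_fourierMode_sub hN hE hl hk, if_neg hlk, mul_zero]
  rw [dft_eq_sum, key]
  field_simp

lemma sum_norm_sq_idft {N : ℤ} (hN : 2 ≤ N) (hE : Even N) (c : ℤ → ℂ) :
    ∑ j ∈ idxs N, ‖idft N c j‖ ^ 2 = N * ∑ k ∈ idxs N, ‖c k‖ ^ 2 := by
  have hN0 : (N : ℂ) ≠ 0 := by exact_mod_cast (by lia : N ≠ 0)
  have key : ∑ j ∈ idxs N, idft N c j * (starRingEnd ℂ) (idft N c j) =
      N * ∑ k ∈ idxs N, c k * (starRingEnd ℂ) (c k) := by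
    calc ∑ j ∈ idxs N, idft N c j * (starRingEnd ℂ) (idft N c j)
        = ∑ k ∈ idxs N, (starRingEnd ℂ) (c k) *
            ∑ j ∈ idxs N, idft N c j * fourierMode N (-k) j := by
          conv_lhs =>
            enter [2, j]
            rw [idft_eq_sum N c j, map_sum, ← idft_eq_sum, Finset.mul_sum]
          rw [Finset.sum_comm]
          refine Finset.sum_congr rfl fun k _ => ?_
          rw [Finset.mul_sum]
          refine Finset.sum_congr rfl fun j _ => ?_
          rw [map_mul, conj_fourierMode]
          ring
      _ = ∑ k ∈ idxs N, (starRingEnd ℂ) (c k) * (N * c k) := by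
          refine Finset.sum_congr rfl fun k hk => ?_
          rw [← dft_idft hN hE c hk, dft_eq_sum, mul_inv_cancel_left₀ hN0]
      _ = _ := by
          rw [Finset.mul_sum]
          exact Finset.sum_congr rfl fun k _ => by ring
  simp only [Complex.mul_conj'] at key
  exact_mod_cast key

lemma norm_dft (N : ℤ) (f : ℤ → ℂ) (k : ℤ) :
    ‖dft N f k‖ = |(N : ℝ)|⁻¹ * ‖idft N (fun j => (starRingEnd ℂ) (f j)) k‖ := by
  rw [dft_eq_sum, norm_mul, norm_inv, Complex.norm_intCast, idft_eq_sum,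
    ← RCLike.norm_conj (∑ j ∈ idxs N, f j * _), map_sum]
  simp only [map_mul, conj_fourierMode, neg_neg, fourierMode_comm N k]

lemma l2norm_nonneg (N : ℤ) (f : ℤ → ℂ) : 0 ≤ l2norm N f := Real.sqrt_nonneg _

lemma l2norm_eq_norm_toLp (N : ℤ) (f : ℤ → ℂ) :
    l2norm N f = √(hgrid N) * ‖(WithLp.toLp 2 fun j : idxs N => f j : EuclideanSpace ℂ (idxs N))‖ := by
  rw [l2norm, EuclideanSpace.norm_eq, Real.sqrt_mul' _ (by positivity)]
  congr 2
  exact (Finset.sum_coe_sort (idxs N) fun j => ‖f j‖ ^ 2).symm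

lemma l2norm_add_le (N : ℤ) (f g : ℤ → ℂ) :
    l2norm N (fun j => f j + g j) ≤ l2norm N f + l2norm N g := by
  simp only [l2norm_eq_norm_toLp, ← mul_add]
  gcongr
  exact norm_add_le (WithLp.toLp 2 fun j : idxs N => f j : EuclideanSpace ℂ (idxs N))
    (WithLp.toLp 2 fun j : idxs N => g j)

lemma l2norm_sub_le (N : ℤ) (f g : ℤ → ℂ) :
    l2norm N (fun j => f j - g j) ≤ l2norm N f + l2norm N g := by
  simp only [l2norm_eq_norm_toLp, ← mul_add]
  gcongr
  exact norm_sub_le (WithLp.toLp 2 fun j : idxs N => f j : EuclideanSpace ℂ (idxs N))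
    (WithLp.toLp 2 fun j : idxs N => g j)

lemma l2norm_le_mul_of_norm_le {N : ℤ} (hN : 0 < N) {f g : ℤ → ℂ} {C : ℝ} (hC : 0 ≤ C)
    (h : ∀ j ∈ idxs N, ‖f j‖ ≤ C * ‖g j‖) : l2norm N f ≤ C * l2norm N g := by
  have hh := hgrid_pos hN
  unfold l2norm
  nth_rewrite 1 [← Real.sqrt_sq hC]
  rw [← Real.sqrt_mul (sq_nonneg C), mul_left_comm, Finset.mul_sum (idxs N) _ (C ^ 2)]
  gcongr with j hj
  rw [← mul_pow]
  gcongr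
  exact h j hj

lemma l2norm_idft {N : ℤ} (hN : 2 ≤ N) (hE : Even N) (c : ℤ → ℂ) :
    l2norm N (idft N c) = √N * l2norm N c := by
  have : (0 : ℝ) ≤ N := by exact_mod_cast (by lia : 0 ≤ N)
  rw [l2norm, l2norm, sum_norm_sq_idft hN hE, ← Real.sqrt_mul this, mul_left_comm]

/-- Parseval's identity for the discrete Fourier transform. -/
lemma sqrt_mul_l2norm_dft {N : ℤ} (hN : 2 ≤ N) (hE : Even N) (f : ℤ → ℂ) :
    √N * l2norm N (dft N f) = l2norm N f := by
  have hN0 : (0 : ℝ) < N := by exact_mod_cast (by lia : 0 < N)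
  rw [l2norm, l2norm, ← Real.sqrt_mul hN0.le]
  simp only [norm_dft, mul_pow, ← Finset.mul_sum, sum_norm_sq_idft hN hE, RCLike.norm_conj,
    abs_of_pos hN0]
  congr 1
  field_simp

/-- A Fourier multiplier bounded by `C` is bounded by `C` on discrete `l²`. -/
lemma l2norm_idft_le {N : ℤ} (hN : 2 ≤ N) (hE : Even N) {c f : ℤ → ℂ} {C : ℝ} (hC : 0 ≤ C)
    (h : ∀ k ∈ idxs N, ‖c k‖ ≤ C * ‖dft N f k‖) : l2norm N (idft N c) ≤ C * l2norm N f := by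
  rw [l2norm_idft hN hE, ← sqrt_mul_l2norm_dft hN hE f, mul_left_comm]
  gcongr
  exact l2norm_le_mul_of_norm_le (by lia) hC h

lemma dft_shift {N : ℤ} (hN : 2 ≤ N) (hE : Even N) {g : ℤ → ℂ} (hg : Function.Periodic g N)
    (k : ℤ) : dft N (fun j => g (j + 1)) k = fourierMode N k 1 * dft N g k := by
  have hN0 : N ≠ 0 := by lia
  have hshift := sum_idxs_shift hN hE (F := fun j => g j * fourierMode N (-k) j) (fun j => by
    simp only [hg j, fourierMode_add_right, fourierMode_period hN0, mul_one])
  rw [dft_eq_sum, dft_eq_sum, ← hshift, mul_left_comm,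
    Finset.mul_sum (idxs N) _ (fourierMode N k 1)]
  congr 1
  refine Finset.sum_congr rfl fun j _ => ?_
  have h1 : fourierMode N k 1 * fourierMode N (-k) 1 = 1 := by
    rw [← fourierMode_add_left, add_neg_cancel, fourierMode_zero_left]
  rw [fourierMode_add_right]
  linear_combination (-(g (j + 1) * fourierMode N (-k) j)) * h1

lemma dft_sub (N : ℤ) (f g : ℤ → ℂ) (k : ℤ) :
    dft N (fun j => f j - g j) k = dft N f k - dft N g k := by
  simp only [dft_eq_sum, sub_mul, Finset.sum_sub_distrib, mul_sub]

lemma dft_const_mul (N : ℤ) (a : ℂ) (f : ℤ → ℂ) (k : ℤ) :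
    dft N (fun j => a * f j) k = a * dft N f k := by
  simp only [dft_eq_sum, mul_assoc, ← Finset.mul_sum]
  ring

lemma dft_shift_sub {N : ℤ} (hN : 2 ≤ N) (hE : Even N) {g : ℤ → ℂ} (hg : Function.Periodic g N)
    (k : ℤ) :
    dft N (fun j => g (j + 1) - g j) k = (fourierMode N k 1 - 1) * dft N g k := by
  rw [dft_sub, dft_shift hN hE hg]
  ring

lemma norm_fourierMode_one_sub_one_le {N : ℤ} (hN : 0 < N) (k : ℤ) :
    ‖fourierMode N k 1 - 1‖ ≤ |(k : ℝ)| * hgrid N := by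
  rw [fourierMode_eq_exp_ofReal]
  refine Real.norm_exp_I_mul_ofReal_sub_one_le.trans_eq ?_
  simp [abs_of_pos (hgrid_pos hN)]

lemma abs_gridPt_le_pi {N k : ℤ} (hN : 0 < N) (hk : k ∈ idxs N) : |gridPt N k| ≤ Real.pi := by
  have hk2 : |2 * k| ≤ N := by
    simp only [idxs, Finset.mem_Icc] at hk
    rw [abs_le]
    lia
  have hk2' : 2 * |(k : ℝ)| ≤ N := by
    have : ((|2 * k| : ℤ) : ℝ) ≤ N := by exact_mod_cast hk2
    simpa [abs_mul] using this
  have h := mul_hgrid hN.ne'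
  have hh := hgrid_pos hN
  rw [gridPt, abs_mul, abs_of_pos hh]
  nlinarith

lemma abs_mul_hgrid_le {N k : ℤ} (hN : 0 < N) (hk : k ∈ idxs N) :
    |(k : ℝ)| * hgrid N ≤ Real.pi / 2 * ‖fourierMode N k 1 - 1‖ := by
  have hθ := abs_gridPt_le_pi hN hk
  have hpi := Real.pi_pos
  have hsin := Real.mul_abs_le_abs_sin (x := gridPt N k / 2) (by
    rw [abs_div, abs_two]
    linarith)
  have habs : |gridPt N k| = |(k : ℝ)| * hgrid N := by
    rw [gridPt, abs_mul, abs_of_pos (hgrid_pos hN)]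
  have hmode : fourierMode N k 1 = Complex.exp (Complex.I * (gridPt N k : ℂ)) := by
    rw [fourierMode_comm, fourierMode]
    simp
  rw [← habs, hmode, Complex.norm_exp_I_mul_ofReal_sub_one, norm_mul, Real.norm_eq_abs,
    Real.norm_eq_abs, abs_two]
  rw [abs_div, abs_two] at hsin
  calc |gridPt N k| = Real.pi * (2 / Real.pi * (|gridPt N k| / 2)) := by field_simp
    _ ≤ Real.pi * |Real.sin (gridPt N k / 2)| := by gcongr
    _ = _ := by ring

lemma one_le_abs_intCast {k : ℤ} (hk : k ≠ 0) : 1 ≤ |(k : ℝ)| := by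
  exact_mod_cast Int.one_le_abs hk

lemma l2norm_Shinv_le {N : ℤ} (hN : 2 ≤ N) (hE : Even N) (f : ℤ → ℂ) :
    l2norm N (Shinv N f) ≤ l2norm N f := by
  rw [← one_mul (l2norm N f)]
  refine l2norm_idft_le hN hE zero_le_one fun k _ => ?_
  split_ifs with hk
  · simp
  · rw [norm_div, norm_mul, Complex.norm_I, Complex.norm_intCast, one_mul, one_mul]
    exact div_le_self (norm_nonneg _) (one_le_abs_intCast hk)

lemma l2norm_Dh_Shinv_le {N : ℤ} (hN : 2 ≤ N) (hE : Even N) {ρ : ℝ → ℝ} {R : ℝ}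
    (hR : ∀ x, |x| ≤ Real.pi → |ρ x| ≤ R) (f : ℤ → ℂ) :
    l2norm N (Dh N ρ (Shinv N f)) ≤ R * l2norm N f := by
  have hR0 : 0 ≤ R := (abs_nonneg _).trans (hR 0 (by simpa using Real.pi_pos.le))
  refine l2norm_idft_le hN hE hR0 fun k hk => ?_
  rw [Shinv, dft_idft hN hE _ hk]
  split_ifs with hk0
  · simp only [mul_zero, norm_zero]
    positivity
  · have hkC : (k : ℂ) ≠ 0 := by exact_mod_cast hk0
    have hI := Complex.I_ne_zero
    have heq : Complex.I * (k : ℂ) * (ρ (gridPt N k) : ℂ) * (dft N f k / (Complex.I * k)) =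
        (ρ (gridPt N k) : ℂ) * dft N f k := by
      field_simp
    rw [heq, norm_mul, Complex.norm_real, Real.norm_eq_abs]
    gcongr
    exact hR _ (abs_gridPt_le_pi (by lia) hk)

/-- `S_h⁻¹` undoes a divided forward difference up to a bounded multiplier. -/
lemma l2norm_Shinv_shift_sub_le {N : ℤ} (hN : 2 ≤ N) (hE : Even N) {g : ℤ → ℂ}
    (hg : Function.Periodic g N) :
    l2norm N (Shinv N fun j => g (j + 1) - g j) ≤ hgrid N * l2norm N g := by
  have hh := hgrid_pos (N := N) (by lia)
  refine l2norm_idft_le hN hE hh.le fun k _ => ?_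
  split_ifs with hk
  · simp only [norm_zero]
    positivity
  · have hk1 := one_le_abs_intCast hk
    rw [dft_shift_sub hN hE hg, norm_div, norm_mul, norm_mul, Complex.norm_I,
      Complex.norm_intCast, one_mul, div_le_iff₀ (by linarith)]
    nlinarith [mul_le_mul_of_nonneg_right
      (norm_fourierMode_one_sub_one_le (N := N) (by lia) k) (norm_nonneg (dft N g k))]

lemma l2norm_Sh_le {N : ℤ} (hN : 2 ≤ N) (hE : Even N) {g : ℤ → ℂ}
    (hg : Function.Periodic g N) :
    l2norm N (Sh N g) ≤ Real.pi / 2 / hgrid N * l2norm N (fun j => g (j + 1) - g j) := by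
  have hh := hgrid_pos (N := N) (by lia)
  have hpi := Real.pi_pos
  refine l2norm_idft_le hN hE (by positivity) fun k hk => ?_
  split_ifs
  · simp only [norm_zero]
    positivity
  · rw [dft_shift_sub hN hE hg, norm_mul, norm_mul, norm_mul, Complex.norm_I,
      Complex.norm_intCast, one_mul, ← mul_assoc]
    gcongr
    rw [div_mul_eq_mul_div, le_div_iff₀ hh]
    exact abs_mul_hgrid_le (by lia) hk

/-- Every spectral derivative is a divided forward difference of a comparable function. -/
lemma exists_Sh_eq_shift_sub {N : ℤ} (hN : 2 ≤ N) (hE : Even N) (φ : ℤ → ℂ) :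
    ∃ ψ : ℤ → ℂ, Function.Periodic ψ N ∧ (∀ j, hgrid N * Sh N φ j = ψ (j + 1) - ψ j) ∧
      l2norm N ψ ≤ Real.pi / 2 * l2norm N φ := by
  have hh := hgrid_pos (N := N) (by lia)
  have hpi := Real.pi_pos
  let c : ℤ → ℂ := fun k => if k = N / 2 then 0 else
    hgrid N * (Complex.I * k * dft N φ k) / (fourierMode N k 1 - 1)
  refine ⟨idft N c, idft_periodic (by lia) c, fun j => ?_, ?_⟩
  · simp only [Sh, idft_eq_sum, Finset.mul_sum, ← Finset.sum_sub_distrib]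
    refine Finset.sum_congr rfl fun k hk => ?_
    rw [fourierMode_add_right]
    by_cases hk2 : k = N / 2
    · simp [c, hk2]
    by_cases hk0 : k = 0
    · simp [c, hk0]
    have hne : fourierMode N k 1 - 1 ≠ 0 := by
      intro h0
      have := abs_mul_hgrid_le (N := N) (by lia) hk
      rw [h0, norm_zero, mul_zero] at this
      nlinarith [one_le_abs_intCast hk0]
    simp only [c, if_neg hk2]
    field_simp
  · refine l2norm_idft_le hN hE (by positivity) fun k hk => ?_
    simp only [c]
    split_ifs
    · simp only [norm_zero]
      positivity
    · rw [norm_div, norm_mul, norm_mul, norm_mul, Complex.norm_I, Complex.norm_intCast, one_mul,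
        Complex.norm_real, Real.norm_eq_abs, abs_of_pos hh]
      refine div_le_of_le_mul₀ (norm_nonneg _) (by positivity) ?_
      have := mul_le_mul_of_nonneg_right (abs_mul_hgrid_le (N := N) (by lia) hk)
        (norm_nonneg (dft N φ k))
      linarith

lemma Shinv_sub (N : ℤ) (f g : ℤ → ℂ) (j : ℤ) :
    Shinv N (fun j => f j - g j) j = Shinv N f j - Shinv N g j := by
  simp only [Shinv, idft_eq_sum, ← Finset.sum_sub_distrib]
  refine Finset.sum_congr rfl fun k _ => ?_
  rw [dft_sub]
  split_ifs <;> ring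

lemma Shinv_const_mul (N : ℤ) (a : ℂ) (f : ℤ → ℂ) (j : ℤ) :
    Shinv N (fun j => a * f j) j = a * Shinv N f j := by
  simp only [Shinv, idft_eq_sum, Finset.mul_sum]
  refine Finset.sum_congr rfl fun k _ => ?_
  rw [dft_const_mul]
  split_ifs <;> ring

lemma l2norm_Shinv_mul_Sh_le {N : ℤ} (hN : 2 ≤ N) (hE : Even N) {F : ℤ → ℂ}
    (hF : Function.Periodic F N) {M L : ℝ} (hM : ∀ j, ‖F j‖ ≤ M)
    (hL : ∀ j, ‖F (j + 1) - F j‖ ≤ L * hgrid N) (φ : ℤ → ℂ) :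
    l2norm N (Shinv N fun j => F j * Sh N φ j) ≤ (M + L) * (Real.pi / 2) * l2norm N φ := by
  have hh := hgrid_pos (N := N) (by lia)
  have hhC : (hgrid N : ℂ) ≠ 0 := by exact_mod_cast hh.ne'
  obtain ⟨ψ, hψ, hdiff, hle⟩ := exists_Sh_eq_shift_sub hN hE φ
  have hM0 : 0 ≤ M := (norm_nonneg _).trans (hM 0)
  have hL0 : 0 ≤ L := by
    have := (norm_nonneg _).trans (hL 0)
    exact nonneg_of_mul_nonneg_left this hh
  let g : ℤ → ℂ := fun j => F (j - 1) * ψ j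
  have hg : Function.Periodic g N := fun j => by
    simp only [g]
    rw [hψ j, add_sub_right_comm, hF]
  let u : ℤ → ℂ := fun j => (F j - F (j - 1)) * ψ j
  have hsplit : ∀ j, hgrid N * Shinv N (fun j => F j * Sh N φ j) j =
      Shinv N (fun j => g (j + 1) - g j) j - Shinv N u j := fun j => by
    rw [← Shinv_const_mul, ← Shinv_sub]
    congr 1
    funext i
    simp only [g, u, add_sub_cancel_right]
    linear_combination F i * hdiff i
  have hgM : l2norm N g ≤ M * l2norm N ψ :=
    l2norm_le_mul_of_norm_le (by lia) hM0 fun j _ => by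
      rw [norm_mul]
      gcongr
      exact hM _
  have huL : l2norm N u ≤ L * hgrid N * l2norm N ψ :=
    l2norm_le_mul_of_norm_le (by lia) (by positivity) fun j _ => by
      rw [norm_mul]
      gcongr
      simpa using hL (j - 1)
  have hbound : hgrid N * l2norm N (Shinv N fun j => F j * Sh N φ j) ≤
      hgrid N * ((M + L) * l2norm N ψ) := by
    calc hgrid N * l2norm N (Shinv N fun j => F j * Sh N φ j)
        ≤ hgrid N * ((hgrid N)⁻¹ * l2norm N
            (fun j => Shinv N (fun j => g (j + 1) - g j) j - Shinv N u j)) := by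
          gcongr
          refine l2norm_le_mul_of_norm_le (by lia) (by positivity) fun j _ => ?_
          rw [← hsplit, norm_mul, Complex.norm_real, Real.norm_eq_abs, abs_of_pos hh,
            inv_mul_cancel_left₀ hh.ne']
      _ = l2norm N (fun j => Shinv N (fun j => g (j + 1) - g j) j - Shinv N u j) := by
          rw [mul_inv_cancel_left₀ hh.ne']
      _ ≤ l2norm N (Shinv N fun j => g (j + 1) - g j) + l2norm N (Shinv N u) :=
          l2norm_sub_le _ _ _
      _ ≤ hgrid N * (M * l2norm N ψ) + L * hgrid N * l2norm N ψ := by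
          gcongr
          · refine (l2norm_Shinv_shift_sub_le hN hE hg).trans ?_
            gcongr
          · exact (l2norm_Shinv_le hN hE u).trans huL
      _ = _ := by ring
  refine (le_of_mul_le_mul_left hbound hh).trans ?_
  rw [mul_assoc]
  gcongr

lemma norm_dft_mul_le {N : ℤ} (hN : 2 ≤ N) (u φ : ℤ → ℂ) (k : ℤ) :
    ‖dft N (fun j => u j * φ j) k‖ ≤ (2 * Real.pi)⁻¹ * (l2norm N u * l2norm N φ) := by
  have hh := hgrid_pos (N := N) (by lia)
  have hN0 : (0 : ℝ) < N := by exact_mod_cast (by lia : 0 < N)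
  have hcs := Real.sum_mul_le_sqrt_mul_sqrt (idxs N) (fun j => ‖u j‖) (fun j => ‖φ j‖)
  have hnorm : l2norm N u * l2norm N φ =
      hgrid N * (√(∑ j ∈ idxs N, ‖u j‖ ^ 2) * √(∑ j ∈ idxs N, ‖φ j‖ ^ 2)) := by
    rw [l2norm, l2norm, Real.sqrt_mul hh.le, Real.sqrt_mul hh.le]
    nth_rewrite 3 [← Real.mul_self_sqrt hh.le]
    ring
  have hNh : (2 * Real.pi)⁻¹ * hgrid N = (N : ℝ)⁻¹ := by
    have hpi := Real.pi_pos
    unfold hgrid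
    field_simp
  rw [hnorm, ← mul_assoc, hNh, dft_eq_sum, norm_mul, norm_inv, Complex.norm_intCast,
    abs_of_pos hN0]
  gcongr
  refine (norm_sum_le _ _).trans (le_trans (le_of_eq ?_) hcs)
  simp only [norm_mul, norm_fourierMode, mul_one]

lemma l2norm_const {N : ℤ} (hN : 2 ≤ N) (hE : Even N) {a : ℝ} (ha : 0 ≤ a) :
    l2norm N (fun _ => (a : ℂ)) = √(2 * Real.pi) * a := by
  have hcard : ((idxs N).card : ℝ) = N := by exact_mod_cast card_idxs hN hE
  rw [l2norm, Finset.sum_const, nsmul_eq_mul, hcard, Complex.norm_real, Real.norm_eq_abs, sq_abs,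
    ← mul_assoc, mul_comm (hgrid N), mul_hgrid (by lia), Real.sqrt_mul (by positivity),
    Real.sqrt_sq ha]

/-- `S_h⁻¹` of a product is controlled by the `l²` norms of both factors. -/
lemma l2norm_Shinv_mul_le {N : ℤ} (hN : 2 ≤ N) (hE : Even N) (u φ : ℤ → ℂ) :
    l2norm N (Shinv N fun j => u j * φ j) ≤
      √(2 * Real.pi * ∑' k : ℤ, 1 / (k : ℝ) ^ 2) * (2 * Real.pi)⁻¹ *
        (l2norm N u * l2norm N φ) := by
  have hh := hgrid_pos (N := N) (by lia)
  have hN0 : (0 : ℝ) < N := by exact_mod_cast (by lia : 0 < N)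
  have hpi := Real.pi_pos
  have hu := l2norm_nonneg N u
  have hφ := l2norm_nonneg N φ
  have hc : l2norm N (fun k => if k = 0 then 0 else
      dft N (fun j => u j * φ j) k / (Complex.I * (k : ℂ))) ≤
      (2 * Real.pi)⁻¹ * (l2norm N u * l2norm N φ) * l2norm N (fun k => ((1 / k : ℝ) : ℂ)) := by
    refine l2norm_le_mul_of_norm_le (by lia) (by positivity) fun k _ => ?_
    split_ifs with hk
    · simp only [norm_zero]
      positivity
    · rw [norm_div, norm_mul, Complex.norm_I, Complex.norm_intCast, one_mul, Complex.norm_real,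
        norm_div, norm_one, Real.norm_eq_abs, div_eq_mul_one_div]
      gcongr
      exact norm_dft_mul_le hN u φ k
  have hinv : √N * l2norm N (fun k => ((1 / k : ℝ) : ℂ)) ≤
      √(2 * Real.pi * ∑' k : ℤ, 1 / (k : ℝ) ^ 2) := by
    rw [l2norm, ← Real.sqrt_mul hN0.le, ← mul_assoc, mul_hgrid (by lia)]
    gcongr
    have hsum : Summable fun k : ℤ => 1 / (k : ℝ) ^ 2 :=
      Real.summable_one_div_int_pow.mpr one_lt_two
    simp only [Complex.norm_real, Real.norm_eq_abs, sq_abs, div_pow, one_pow]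
    exact hsum.sum_le_tsum _ fun k _ => by positivity
  rw [Shinv, l2norm_idft hN hE]
  calc _ ≤ √N * ((2 * Real.pi)⁻¹ * (l2norm N u * l2norm N φ) *
        l2norm N (fun k => ((1 / k : ℝ) : ℂ))) := by gcongr
    _ = (√N * l2norm N (fun k => ((1 / k : ℝ) : ℂ))) * (2 * Real.pi)⁻¹ *
        (l2norm N u * l2norm N φ) := by ring
    _ ≤ _ := by gcongr

lemma l2norm_Sh_le_of_lipschitz {N : ℤ} (hN : 2 ≤ N) (hE : Even N) {F : ℤ → ℂ}
    (hF : Function.Periodic F N) {L : ℝ} (hL0 : 0 ≤ L)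
    (hL : ∀ j, ‖F (j + 1) - F j‖ ≤ L * hgrid N) :
    l2norm N (Sh N F) ≤ Real.pi / 2 * (√(2 * Real.pi) * L) := by
  have hh := hgrid_pos (N := N) (by lia)
  have hpi := Real.pi_pos
  have hdiff : l2norm N (fun j => F (j + 1) - F j) ≤ hgrid N * (√(2 * Real.pi) * L) := by
    rw [← l2norm_const hN hE hL0]
    refine l2norm_le_mul_of_norm_le (by lia) hh.le fun j _ => ?_
    rw [Complex.norm_real, Real.norm_eq_abs, abs_of_nonneg hL0, mul_comm]
    exact hL j
  refine (l2norm_Sh_le hN hE hF).trans ?_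
  calc _ ≤ Real.pi / 2 / hgrid N * (hgrid N * (√(2 * Real.pi) * L)) := by gcongr
    _ = _ := by field_simp

lemma samples_periodic {N : ℤ} (hN : N ≠ 0) {f : ℝ → ℂ}
    (hf : Function.Periodic f (2 * Real.pi)) : Function.Periodic (samples N f) N := by
  intro j
  rw [samples, samples, gridPt, Int.cast_add, add_mul, mul_hgrid hN, hf]
  rfl

lemma Function.Periodic.exists_norm_le_of_continuous {f : ℝ → ℂ} {c : ℝ}
    (hf : Function.Periodic f c) (hc : c ≠ 0) (hcont : Continuous f) :
    ∃ M, 0 ≤ M ∧ ∀ x, ‖f x‖ ≤ M := by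
  obtain ⟨M, hM⟩ := (hf.isBounded_of_continuous hc hcont).exists_norm_le
  exact ⟨M, (norm_nonneg _).trans (hM (f 0) ⟨0, rfl⟩), fun x => hM _ ⟨x, rfl⟩⟩

/-- Lemma 8.14: discrete integration by parts for `S_h⁻¹`, and
`S_h⁻¹(f(α_·)φ)` is a first-order smoothing operator on `φ`. -/
theorem Shinv_product_smoothing (f : ℝ → ℂ)
    (hper : Function.Periodic f (2 * Real.pi)) (hf : ContDiff ℝ 3 f)
    (ρ : ℝ → ℝ) (hρ : IsFilter ρ) :
    ∃ c : ℝ, 0 < c ∧ ∀ N : ℤ, 2 ≤ N → Even N → ∀ φ : ℤ → ℂ,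
      dmean N (fun j => f (gridPt N j) * φ j) = 0 →
      l2norm N (fun i => Shinv N (fun j => f (gridPt N j) * Sh N φ j) i +
          Shinv N (fun j => Sh N (samples N f) j * φ j) i -
          f (gridPt N i) * φ i) ≤ c * l2norm N φ ∧
      l2norm N (Shinv N (fun j => f (gridPt N j) * φ j)) ≤ c * l2norm N φ ∧
      l2norm N (Dh N ρ (Shinv N (fun j => f (gridPt N j) * φ j))) ≤ c * l2norm N φ ∧
      l2norm N (Shinv N (fun j => f (gridPt N j) * Sh N φ j)) ≤ c * l2norm N φ := by
  have hpi := Real.pi_pos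
  obtain ⟨M, hM0, hM⟩ :=
    hper.exists_norm_le_of_continuous (by positivity) hf.continuous
  have hper' : Function.Periodic (deriv f) (2 * Real.pi) := fun x => by
    rw [← deriv_comp_add_const]
    congr 1
    exact funext hper
  obtain ⟨L, hL0, hL⟩ :=
    hper'.exists_norm_le_of_continuous (by positivity) (hf.continuous_deriv (by norm_num))
  have hlip : ∀ x y, ‖f y - f x‖ ≤ L * ‖y - x‖ := fun x y =>
    convex_univ.norm_image_sub_le_of_norm_deriv_le
      (fun z _ => (hf.differentiable (by norm_num)) z) (fun z _ => hL z) trivial trivial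
  obtain ⟨R, hR⟩ := (isCompact_Icc (a := -Real.pi) (b := Real.pi)).exists_bound_of_continuousOn
    hρ.smooth.choose_spec.2.continuous.continuousOn
  have hR' : ∀ x, |x| ≤ Real.pi → |ρ x| ≤ R := fun x hx => hR x (abs_le.mp hx)
  have hR0 : 0 ≤ R := (abs_nonneg _).trans (hR' 0 (by simpa using hpi.le))
  set A := (M + L) * (Real.pi / 2)
  set B := √(2 * Real.pi * ∑' k : ℤ, 1 / (k : ℝ) ^ 2) * (2 * Real.pi)⁻¹ *
    (Real.pi / 2 * (√(2 * Real.pi) * L))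
  have hA0 : 0 ≤ A := by positivity
  have hB0 : 0 ≤ B := by positivity
  refine ⟨A + B + M + R * M + 1, by positivity, fun N hN hE φ _ => ?_⟩
  have hh := hgrid_pos (N := N) (by lia)
  have hφ := l2norm_nonneg N φ
  have hF : Function.Periodic (samples N f) N := samples_periodic (by lia) hper
  have hFL : ∀ j, ‖samples N f (j + 1) - samples N f j‖ ≤ L * hgrid N := fun j => by
    refine (hlip _ _).trans_eq ?_
    congr 1
    rw [← abs_of_pos hh, Real.norm_eq_abs]
    congr 1
    simp only [gridPt]
    push_cast
    ring
  have hmul : l2norm N (fun j => f (gridPt N j) * φ j) ≤ M * l2norm N φ :=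
    l2norm_le_mul_of_norm_le (by lia) hM0 fun j _ => by
      rw [norm_mul]
      gcongr
      exact hM _
  have hA : l2norm N (Shinv N fun j => f (gridPt N j) * Sh N φ j) ≤ A * l2norm N φ :=
    l2norm_Shinv_mul_Sh_le hN hE hF (fun _ => hM _) hFL φ
  have hB : l2norm N (Shinv N fun j => Sh N (samples N f) j * φ j) ≤ B * l2norm N φ := by
    refine (l2norm_Shinv_mul_le hN hE _ φ).trans ?_
    simp only [B]
    rw [mul_assoc _ _ (l2norm N φ)]
    gcongr
    exact l2norm_Sh_le_of_lipschitz hN hE hF hL0 hFL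
  have hRM : 0 ≤ R * M := mul_nonneg hR0 hM0
  refine ⟨?_, ?_, ?_, ?_⟩
  · calc _ ≤ (A * l2norm N φ + B * l2norm N φ) + M * l2norm N φ :=
          (l2norm_sub_le _ _ _).trans (add_le_add
            ((l2norm_add_le _ _ _).trans (add_le_add hA hB)) hmul)
      _ = (A + B + M) * l2norm N φ := by ring
      _ ≤ _ := mul_le_mul_of_nonneg_right (by linarith) hφ
  · refine (l2norm_Shinv_le hN hE _).trans (hmul.trans ?_)
    gcongr
    linarith
  · refine (l2norm_Dh_Shinv_le hN hE hR' _).trans ?_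
    calc _ ≤ R * (M * l2norm N φ) := by gcongr
      _ = R * M * l2norm N φ := by ring
      _ ≤ _ := mul_le_mul_of_nonneg_right (by linarith) hφ
  · refine hA.trans ?_
    gcongr
    linarith

end
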